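/- arXiv:1306.5742 — 4 statements merged into one kernel-verified Lean document; each statement's English description precedes it below -/
import Mathlib

section
/- (Extended first Frobenius–Stickelberger formula.) For every integer λ ≥ 1, every natural number n, and every triple (u, v, w) of C^n complex-valued functions on an interval J with u nowhere vanishing, one has Σ_{p=0}^{n} C(n,p) · (1/(p+λ)) · D^p(u^{p+λ} w) · D^{n-p}(u^{-p-λ} v) = Σ_{p=0}^{n} C(n,p) · (1/(p+λ)) · D^p(w) · D^{n-p}(v). -/
open scoped Nat BigOperators

/-- Interchange of a double sum weighted by the trinomial coefficients `C(n,p) C(p,k)`. -/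
lemma sum_choose_mul_sum_choose_left (n : ℕ) (f : ℕ → ℕ → ℕ → ℂ) :
    ∑ p ∈ Finset.range (n + 1), (n.choose p : ℂ) *
        ∑ k ∈ Finset.range (p + 1), (p.choose k : ℂ) * f k (p - k) (n - p) =
      ∑ k ∈ Finset.range (n + 1), (n.choose k : ℂ) *
        ∑ p ∈ Finset.range (n - k + 1), ((n - k).choose p : ℂ) * f k p (n - k - p) := by
  simp only [Finset.mul_sum, Finset.sum_sigma']
  refine Finset.sum_nbij' (fun x => ⟨x.2, x.1 - x.2⟩) (fun x => ⟨x.1 + x.2, x.1⟩) ?_ ?_ ?_ ?_ ?_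
  · rintro ⟨p, k⟩ h
    simp only [Finset.mem_sigma, Finset.mem_range] at h ⊢
    omega
  · rintro ⟨k, p⟩ h
    simp only [Finset.mem_sigma, Finset.mem_range] at h ⊢
    omega
  · rintro ⟨p, k⟩ h
    simp only [Finset.mem_sigma, Finset.mem_range] at h ⊢
    simp only [Sigma.mk.injEq, heq_eq_eq, and_true]
    omega
  · rintro ⟨k, p⟩ h
    simp
  · rintro ⟨p, k⟩ h
    simp only [Finset.mem_sigma, Finset.mem_range] at h ⊢
    have hc : (n.choose p : ℂ) * (p.choose k : ℂ) =
        (n.choose k : ℂ) * ((n - k).choose (p - k) : ℂ) := by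
      exact_mod_cast Nat.choose_mul (by omega : k ≤ p)
    rw [← mul_assoc, hc, mul_assoc, show n - k - (p - k) = n - p by omega]

/-- Interchange of a double sum weighted by the trinomial coefficients `C(n,p) C(n-p,k)`. -/
lemma sum_choose_mul_sum_choose_right (n : ℕ) (f : ℕ → ℕ → ℕ → ℂ) :
    ∑ p ∈ Finset.range (n + 1), (n.choose p : ℂ) *
        ∑ k ∈ Finset.range (n - p + 1), ((n - p).choose k : ℂ) * f k p (n - p - k) =
      ∑ k ∈ Finset.range (n + 1), (n.choose k : ℂ) *
        ∑ p ∈ Finset.range (n - k + 1), ((n - k).choose p : ℂ) * f k p (n - k - p) := by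
  simp only [Finset.mul_sum, Finset.sum_sigma']
  refine Finset.sum_nbij' (fun x => ⟨x.2, x.1⟩) (fun x => ⟨x.2, x.1⟩) ?_ ?_ ?_ ?_ ?_
  · rintro ⟨p, k⟩ h
    simp only [Finset.mem_sigma, Finset.mem_range] at h ⊢
    omega
  · rintro ⟨k, p⟩ h
    simp only [Finset.mem_sigma, Finset.mem_range] at h ⊢
    omega
  · rintro ⟨p, k⟩ h
    rfl
  · rintro ⟨k, p⟩ h
    rfl
  · rintro ⟨p, k⟩ h
    simp only [Finset.mem_sigma, Finset.mem_range] at h ⊢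
    have hc : (n.choose p : ℂ) * ((n - p).choose k : ℂ) =
        (n.choose k : ℂ) * ((n - k).choose p : ℂ) := by
      have h1 := Nat.choose_mul (n := n) (k := p + k) (s := p) (by omega)
      have h2 := Nat.choose_mul (n := n) (k := p + k) (s := k) (by omega)
      rw [Nat.add_sub_cancel_left] at h1
      rw [Nat.add_sub_cancel, ← Nat.choose_symm_add] at h2
      exact_mod_cast h1.symm.trans h2
    rw [← mul_assoc, hc, mul_assoc, show n - k - p = n - p - k by omega]

lemma ContDiffOn.pow_mul {J : Set ℝ} {m : WithTop ℕ∞} {f g : ℝ → ℂ} (hf : ContDiffOn ℝ m f J)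
    (hg : ContDiffOn ℝ m g J) (k : ℕ) : ContDiffOn ℝ m (f ^ k * g) J :=
  (hf.pow k).mul hg

/-- The binomial sum `∑ C(n,p) D^p(u^p w) D^(n-p)(u^(-p) v)` depends on `v` and `w` only through
their product: a factor `h` may be moved from `w` to `v`. -/
lemma sum_choose_iteratedDerivWithin_move_factor {J : Set ℝ} (hJ : UniqueDiffOn ℝ J)
    {u : ℝ → ℂ} (hu0 : ∀ t ∈ J, u t ≠ 0) {t : ℝ} (ht : t ∈ J) (n : ℕ) :
    ∀ {h v w : ℝ → ℂ}, ContDiffOn ℝ n u J → ContDiffOn ℝ n h J → ContDiffOn ℝ n v J →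
      ContDiffOn ℝ n w J →
      ∑ p ∈ Finset.range (n + 1), (n.choose p : ℂ) *
          (iteratedDerivWithin p (u ^ p * (h * w)) J t *
            iteratedDerivWithin (n - p) (u⁻¹ ^ p * v) J t) =
        ∑ p ∈ Finset.range (n + 1), (n.choose p : ℂ) *
          (iteratedDerivWithin p (u ^ p * w) J t *
            iteratedDerivWithin (n - p) (u⁻¹ ^ p * (h * v)) J t) := by
  induction n using Nat.strong_induction_on with
  | _ n ih =>
  intro h v w hu hh hv hw
  have hr : ContDiffOn ℝ n u⁻¹ J := hu.inv hu0
  have hle : ∀ {m : ℕ}, m ≤ n → (m : WithTop ℕ∞) ≤ n := fun hm => by exact_mod_cast hm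
  have hleft := sum_choose_mul_sum_choose_left n fun k i j =>
    iteratedDerivWithin k h J t * (iteratedDerivWithin i (u ^ (k + i) * w) J t *
      iteratedDerivWithin j (u⁻¹ ^ (k + i) * v) J t)
  have hright := sum_choose_mul_sum_choose_right n fun k i j =>
    iteratedDerivWithin k h J t * (iteratedDerivWithin i (u ^ i * w) J t *
      iteratedDerivWithin j (u⁻¹ ^ i * v) J t)
  calc
    _ = _ := by
      refine Finset.sum_congr rfl fun p hp => ?_
      have hpn : p ≤ n := Nat.lt_succ_iff.mp (Finset.mem_range.mp hp)
      rw [show u ^ p * (h * w) = h * (u ^ p * w) by ring,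
        iteratedDerivWithin_mul ht hJ ((hh.of_le (hle hpn)) t ht)
          (((hu.pow_mul hw p).of_le (hle hpn)) t ht), Finset.sum_mul]
      congr 1
      refine Finset.sum_congr rfl fun k hk => ?_
      rw [Nat.add_sub_cancel' (Nat.lt_succ_iff.mp (Finset.mem_range.mp hk))]
      ring
    _ = _ := hleft
    _ = _ := by
      refine Finset.sum_congr rfl fun k hk => ?_
      have hkn : k ≤ n := Nat.lt_succ_iff.mp (Finset.mem_range.mp hk)
      congr 1
      rcases Nat.eq_zero_or_pos k with rfl | hk0
      · simp
      have hm := hle (Nat.sub_le n k)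
      have key := ih (n - k) (by omega) (h := u ^ k) (hu.of_le hm) ((hu.pow k).of_le hm)
        ((hr.pow_mul hv k).of_le hm) (hw.of_le hm)
      have hcancel : ∀ p m, iteratedDerivWithin m (u⁻¹ ^ p * (u ^ k * (u⁻¹ ^ k * v))) J t =
          iteratedDerivWithin m (u⁻¹ ^ p * v) J t := by
        refine fun p m => iteratedDerivWithin_congr (fun x hx => ?_) ht
        have := hu0 x hx
        simp only [Pi.mul_apply, Pi.pow_apply, Pi.inv_apply, inv_pow]
        field_simp
      simp only [hcancel] at key
      simp only [mul_left_comm _ (iteratedDerivWithin k h J t), ← Finset.mul_sum]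
      rw [← key]
      congr 1
      refine Finset.sum_congr rfl fun p _ => ?_
      rw [show u ^ (k + p) * w = u ^ p * (u ^ k * w) by ring,
        show u⁻¹ ^ (k + p) * v = u⁻¹ ^ p * (u⁻¹ ^ k * v) by ring]
    _ = _ := hright.symm
    _ = _ := by
      refine Finset.sum_congr rfl fun p _ => ?_
      have hm := hle (Nat.sub_le n p)
      rw [show u⁻¹ ^ p * (h * v) = h * (u⁻¹ ^ p * v) by ring,
        iteratedDerivWithin_mul ht hJ ((hh.of_le hm) t ht)
          (((hr.pow_mul hv p).of_le hm) t ht)]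
      congr 1
      rw [Finset.mul_sum]
      refine Finset.sum_congr rfl fun k _ => ?_
      ring

lemma iteratedDerivWithin_succ_pow_succ_mul {J : Set ℝ} (hJ : UniqueDiffOn ℝ J) {u w : ℝ → ℂ}
    {t : ℝ} (ht : t ∈ J) (m k : ℕ) (hu : ContDiffOn ℝ (m + 1) u J)
    (hw : ContDiffOn ℝ (m + 1) w J) :
    iteratedDerivWithin (m + 1) (u ^ (k + 1) * w) J t =
      iteratedDerivWithin m (u ^ (k + 1) * derivWithin w J) J t +
        (k + 1) * iteratedDerivWithin m (u ^ k * (derivWithin u J * w)) J t := by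
  have hm : (m : WithTop ℕ∞) ≤ m + 1 := by exact_mod_cast Nat.le_succ m
  have hum := hu.of_le hm
  have hdu : ContDiffOn ℝ m (derivWithin u J) J := hu.derivWithin hJ le_rfl
  have hdw : ContDiffOn ℝ m (derivWithin w J) J := hw.derivWithin hJ le_rfl
  have hwm := hw.of_le hm
  have hC : ContDiffOn ℝ m (u ^ k * (derivWithin u J * w)) J := hum.pow_mul (hdu.mul hwm) k
  rw [iteratedDerivWithin_succ', ← iteratedDerivWithin_const_mul ht hJ _ (hC t ht),
    ← iteratedDerivWithin_add ht hJ ((hum.pow_mul hdw (k + 1)) t ht)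
      ((contDiffOn_const.mul hC) t ht)]
  refine iteratedDerivWithin_congr (fun x hx => ?_) ht
  have hux := ((hu.differentiableOn (by simp)) x hx).hasDerivWithinAt
  have hwx := ((hw.differentiableOn (by simp)) x hx).hasDerivWithinAt
  rw [((hux.pow (k + 1)).mul hwx).derivWithin (hJ x hx)]
  simp
  ring

lemma iteratedDerivWithin_succ_inv_pow_mul {J : Set ℝ} (hJ : UniqueDiffOn ℝ J) {u v : ℝ → ℂ}
    (hu0 : ∀ t ∈ J, u t ≠ 0) {t : ℝ} (ht : t ∈ J) (m k : ℕ) (hu : ContDiffOn ℝ (m + 1) u J)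
    (hv : ContDiffOn ℝ (m + 1) v J) :
    iteratedDerivWithin (m + 1) (u⁻¹ ^ k * v) J t =
      iteratedDerivWithin m (u⁻¹ ^ k * derivWithin v J) J t -
        k * iteratedDerivWithin m (u⁻¹ ^ (k + 1) * (derivWithin u J * v)) J t := by
  have hm : (m : WithTop ℕ∞) ≤ m + 1 := by exact_mod_cast Nat.le_succ m
  have hrm := (hu.of_le hm).inv hu0
  have hdu : ContDiffOn ℝ m (derivWithin u J) J := hu.derivWithin hJ le_rfl
  have hdv : ContDiffOn ℝ m (derivWithin v J) J := hv.derivWithin hJ le_rfl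
  have hvm := hv.of_le hm
  have hC : ContDiffOn ℝ m (u⁻¹ ^ (k + 1) * (derivWithin u J * v)) J :=
    hrm.pow_mul (hdu.mul hvm) (k + 1)
  rw [iteratedDerivWithin_succ', ← iteratedDerivWithin_const_mul ht hJ _ (hC t ht),
    ← iteratedDerivWithin_sub ht hJ ((hrm.pow_mul hdv k) t ht)
      ((contDiffOn_const.mul hC) t ht)]
  refine iteratedDerivWithin_congr (fun x hx => ?_) ht
  have hux := ((hu.differentiableOn (by simp)) x hx).hasDerivWithinAt
  have hvx := ((hv.differentiableOn (by simp)) x hx).hasDerivWithinAt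
  have hx0 := hu0 x hx
  rw [(((hux.inv hx0).pow k).mul hvx).derivWithin (hJ x hx)]
  rcases k with _ | k
  · simp
  · simp
    field_simp
    ring

theorem stmt2 (J : Set ℝ) (hJconn : J.OrdConnected) (hJuniq : UniqueDiffOn ℝ J)
    (n : ℕ) (l : ℕ) (hl : 1 ≤ l) (u v w : ℝ → ℂ)
    (hu : ContDiffOn ℝ n u J) (hv : ContDiffOn ℝ n v J) (hw : ContDiffOn ℝ n w J)
    (hu0 : ∀ t ∈ J, u t ≠ 0) :
    ∀ t ∈ J,
      (∑ p ∈ Finset.range (n + 1), (n.choose p : ℂ) * (1 / ((p : ℂ) + l)) *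
        iteratedDerivWithin p (u ^ (p + l) * w) J t *
        iteratedDerivWithin (n - p) (u⁻¹ ^ (p + l) * v) J t) =
      ∑ p ∈ Finset.range (n + 1), (n.choose p : ℂ) * (1 / ((p : ℂ) + l)) *
        iteratedDerivWithin p w J t *
        iteratedDerivWithin (n - p) v J t := by
  intro t ht
  induction n generalizing l v w with
  | zero =>
    have := hu0 t ht
    simp
    field_simp
  | succ n ih =>
    have hn : (n : WithTop ℕ∞) ≤ (n + 1 : ℕ) := by exact_mod_cast Nat.le_succ n
    have hun := hu.of_le hn
    have hvn := hv.of_le hn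
    have hwn := hw.of_le hn
    have hd : ∀ {f : ℝ → ℂ}, ContDiffOn ℝ (n + 1 : ℕ) f J → ContDiffOn ℝ n (derivWithin f J) J :=
      fun hf => hf.derivWithin hJuniq (by simp)
    have ih_v := ih l hl (derivWithin v J) w hun (hd hv) hwn
    have ih_w := ih (l + 1) (by omega) v (derivWithin w J) hun hvn (hd hw)
    have hmove := sum_choose_iteratedDerivWithin_move_factor hJuniq hu0 ht n hun (hd hu)
      ((hun.inv hu0).pow_mul hvn (l + 1)) (hun.pow_mul hwn l)
    have hL := Finset.sum_choose_succ_mul (fun i j => 1 / ((i : ℂ) + l) *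
      (iteratedDerivWithin i (u ^ (i + l) * w) J t *
        iteratedDerivWithin j (u⁻¹ ^ (i + l) * v) J t)) n
    have hR := Finset.sum_choose_succ_mul (fun i j => 1 / ((i : ℂ) + l) *
      (iteratedDerivWithin i w J t * iteratedDerivWithin j v J t)) n
    simp only [mul_assoc] at hL hR ih_v ih_w ⊢
    rw [hL, hR]
    have hR_v : ∑ p ∈ Finset.range (n + 1), (n.choose p : ℂ) * (1 / ((p : ℂ) + l) *
        (iteratedDerivWithin p w J t * iteratedDerivWithin (n + 1 - p) v J t)) =
        ∑ p ∈ Finset.range (n + 1), (n.choose p : ℂ) * (1 / ((p : ℂ) + l) *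
        (iteratedDerivWithin p w J t * iteratedDerivWithin (n - p) (derivWithin v J) J t)) := by
      refine Finset.sum_congr rfl fun p hp => ?_
      rw [Nat.succ_sub (Nat.lt_succ_iff.mp (Finset.mem_range.mp hp)), iteratedDerivWithin_succ']
    have hR_w : ∑ p ∈ Finset.range (n + 1), (n.choose p : ℂ) * (1 / (((p + 1 : ℕ) : ℂ) + l) *
        (iteratedDerivWithin (p + 1) w J t * iteratedDerivWithin (n - p) v J t)) =
        ∑ p ∈ Finset.range (n + 1), (n.choose p : ℂ) * (1 / ((p : ℂ) + (l + 1 : ℕ)) *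
        (iteratedDerivWithin p (derivWithin w J) J t * iteratedDerivWithin (n - p) v J t)) := by
      refine Finset.sum_congr rfl fun p _ => ?_
      rw [iteratedDerivWithin_succ']
      push_cast
      ring
    rw [hR_v, hR_w, ← ih_v, ← ih_w, ← sub_eq_zero]
    rw [← sub_eq_zero] at hmove
    rw [← hmove, ← Finset.sum_add_distrib, ← Finset.sum_add_distrib, ← Finset.sum_sub_distrib,
      ← Finset.sum_sub_distrib]
    refine Finset.sum_congr rfl fun p hp => ?_
    have hpn : p ≤ n := Nat.lt_succ_iff.mp (Finset.mem_range.mp hp)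
    have hle : ∀ {m : ℕ}, m ≤ n → (m + 1 : WithTop ℕ∞) ≤ (n + 1 : ℕ) := fun hm => by
      exact_mod_cast Nat.succ_le_succ hm
    have hm := hle (Nat.sub_le n p)
    have hp := hle hpn
    rw [Nat.succ_sub hpn, iteratedDerivWithin_succ_inv_pow_mul hJuniq hu0 ht (n - p) (p + l)
        (hu.of_le hm) (hv.of_le hm), show p + 1 + l = p + l + 1 by ring,
      iteratedDerivWithin_succ_pow_succ_mul hJuniq ht p (p + l) (hu.of_le hp) (hw.of_le hp),
      show u ^ p * (derivWithin u J * (u ^ l * w)) = u ^ (p + l) * (derivWithin u J * w) by ring,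
      show u ^ p * (u ^ l * w) = u ^ (p + l) * w by ring,
      show u⁻¹ ^ p * (derivWithin u J * (u⁻¹ ^ (l + 1) * v)) =
        u⁻¹ ^ (p + l + 1) * (derivWithin u J * v) by ring,
      show u⁻¹ ^ p * (u⁻¹ ^ (l + 1) * v) = u⁻¹ ^ (p + l + 1) * v by ring,
      show p + (l + 1) = p + l + 1 by ring]
    have h0 : (p : ℂ) + l ≠ 0 := by exact_mod_cast (by omega : p + l ≠ 0)
    have h1 : (p : ℂ) + l + 1 ≠ 0 := by exact_mod_cast (by omega : p + l + 1 ≠ 0)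
    push_cast
    rw [show (p : ℂ) + 1 + l = p + l + 1 by ring, show (p : ℂ) + (l + 1) = p + l + 1 by ring]
    field_simp
    ring
end

section
/- (Dual extended Frobenius–Stickelberger formula.) For every integer λ ≥ 1, every natural number n, and every triple (u, v, w) of C^n complex-valued functions on an interval J with u nowhere vanishing, one has Σ_{p=0}^{n} C(n,p) · ((-1)^p/(p+λ)) · u^{p+λ} · D^p(v · D^{n-p}(u^{-p-λ} w)) = Σ_{p=0}^{n} C(n,p) · ((-1)^p/(p+λ)) · D^p(v · D^{n-p} w). -/
open scoped Nat BigOperators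

section IteratedDerivWithin

variable {𝕜 F : Type*} [NontriviallyNormedField 𝕜] [NormedAddCommGroup F] [NormedSpace 𝕜 F]

theorem iteratedDerivWithin_iteratedDerivWithin (i m : ℕ) (f : 𝕜 → F) (s : Set 𝕜) :
    iteratedDerivWithin i (iteratedDerivWithin m f s) s = iteratedDerivWithin (i + m) f s := by
  induction i with
  | zero => simp
  | succ i ih => rw [iteratedDerivWithin_succ, ih, Nat.add_right_comm, iteratedDerivWithin_succ]

theorem ContDiffOn.iteratedDerivWithin_of_add {s : Set 𝕜} (hs : UniqueDiffOn 𝕜 s) {f : 𝕜 → F}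
    {p m : ℕ} (hf : ContDiffOn 𝕜 ((p + m : ℕ) : WithTop ℕ∞) f s) :
    ContDiffOn 𝕜 p (iteratedDerivWithin m f s) s := by
  induction m generalizing f with
  | zero => simpa using hf
  | succ m ih =>
    rw [iteratedDerivWithin_succ']
    exact ih (hf.derivWithin hs (by norm_cast))

/-- Leibniz rule for `D^p (v * D^(n-p) g)`; the summands with `p < a` vanish. -/
theorem iteratedDerivWithin_mul_iteratedDerivWithin {𝔸 : Type*} [NormedCommRing 𝔸]
    [NormedAlgebra 𝕜 𝔸] {s : Set 𝕜} (hs : UniqueDiffOn 𝕜 s) {v g : 𝕜 → 𝔸} {n p : ℕ}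
    (hv : ContDiffOn 𝕜 n v s) (hg : ContDiffOn 𝕜 n g s) (hp : p ≤ n) {t : 𝕜} (ht : t ∈ s) :
    iteratedDerivWithin p (v * iteratedDerivWithin (n - p) g s) s t =
      ∑ a ∈ Finset.range (n + 1), (p.choose a : 𝔸) * iteratedDerivWithin a v s t *
        iteratedDerivWithin (n - a) g s t := by
  have hg' : ContDiffOn 𝕜 p (iteratedDerivWithin (n - p) g s) s :=
    ContDiffOn.iteratedDerivWithin_of_add hs (by rwa [Nat.add_sub_cancel' hp])
  rw [iteratedDerivWithin_mul ht hs ((hv.of_le (by exact_mod_cast hp)) t ht) (hg' t ht)]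
  refine (Finset.sum_congr rfl fun a ha => ?_).trans
    (Finset.sum_subset (Finset.range_subset_range.2 (Nat.succ_le_succ hp)) fun a _ ha => ?_)
  · rw [iteratedDerivWithin_iteratedDerivWithin,
      show p - a + (n - p) = n - a by have := Finset.mem_range.1 ha; omega]
  · rw [Nat.choose_eq_zero_of_lt (by simpa [Nat.lt_succ_iff] using ha)]
    simp

end IteratedDerivWithin

/-- The `n`-th finite difference of a polynomial of degree less than `n` vanishes. -/
theorem Polynomial.sum_choose_mul_neg_one_pow_mul_eval_eq_zero {P : Polynomial ℂ} {n : ℕ}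
    (hP : P.degree < n) :
    ∑ p ∈ Finset.range (n + 1), (n.choose p : ℂ) * (-1) ^ p * P.eval (p : ℂ) = 0 := by
  rcases eq_or_ne P 0 with rfl | h0
  · simp
  have h := congrFun (Polynomial.fwdDiff_iter_eq_zero_of_degree_lt
    ((Polynomial.natDegree_lt_iff_degree_lt h0).2 hP)) 0
  rw [fwdDiff_iter_eq_sum_shift] at h
  have h2 := congrArg (fun z : ℂ => (-1) ^ n * z) h
  simp only [Finset.mul_sum, Pi.zero_apply, mul_zero] at h2
  rw [← h2]
  refine Finset.sum_congr rfl fun p hp => ?_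
  have hpn : p ≤ n := Nat.lt_succ_iff.1 (Finset.mem_range.1 hp)
  obtain ⟨k, rfl⟩ := Nat.exists_eq_add_of_le hpn
  have h1 : ((-1 : ℂ) ^ k) * (-1) ^ k = 1 := by rw [← mul_pow]; simp
  simp only [zsmul_eq_mul, nsmul_eq_mul, mul_one, zero_add, Nat.add_sub_cancel_left, pow_add]
  push_cast
  linear_combination (-((p + k).choose p : ℂ) * (-1) ^ p * P.eval (p : ℂ)) * h1

theorem Polynomial.sum_choose_mul_choose_mul_eval_eq_zero {S : Polynomial ℂ} {n a : ℕ} (ha : a ≤ n)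
    (hS : S.degree < (n - a : ℕ)) (l : ℕ) :
    ∑ p ∈ Finset.range (n + 1),
      (n.choose p : ℂ) * (-1) ^ p * ((p.choose a : ℂ) * S.eval ((p + l : ℕ) : ℂ)) = 0 := by
  rcases eq_or_ne S 0 with rfl | h0
  · simp
  set P : Polynomial ℂ := Polynomial.C ((a ! : ℂ)⁻¹) * descPochhammer ℂ a *
    S.comp (Polynomial.X + Polynomial.C (l : ℂ)) with hPdef
  have hS' := (Polynomial.natDegree_lt_iff_degree_lt h0).2 hS
  have hdeg : P.natDegree < n := by
    refine (Polynomial.natDegree_mul_le).trans_lt ?_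
    have h1 := Polynomial.natDegree_C_mul_le ((a ! : ℂ)⁻¹) (descPochhammer ℂ a)
    rw [descPochhammer_natDegree] at h1
    rw [Polynomial.natDegree_comp, Polynomial.natDegree_X_add_C]
    omega
  rw [← Polynomial.sum_choose_mul_neg_one_pow_mul_eval_eq_zero
    (Polynomial.degree_le_natDegree.trans_lt (by exact_mod_cast hdeg) : P.degree < n)]
  refine Finset.sum_congr rfl fun p _ => ?_
  rw [Nat.cast_choose_eq_descPochhammer_div ℂ p a, hPdef]
  simp only [Polynomial.eval_mul, Polynomial.eval_C, Polynomial.eval_comp, Polynomial.eval_add,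
    Polynomial.eval_X, Nat.cast_add]
  ring

theorem derivWithin_inv_pow_mul {J : Set ℝ} {u w : ℝ → ℂ} {t : ℝ} (hu0 : u t ≠ 0)
    (hu : DifferentiableWithinAt ℝ u J t) (hw : DifferentiableWithinAt ℝ w J t)
    (hJ : UniqueDiffWithinAt ℝ J t) (q : ℕ) :
    derivWithin (u⁻¹ ^ q * w) J t =
      (q : ℂ) * (u⁻¹ ^ q * (-(derivWithin u J * u⁻¹) * w)) t + (u⁻¹ ^ q * derivWithin w J) t := by
  have h := (((hu.hasDerivWithinAt.inv hu0).pow q).mul hw.hasDerivWithinAt).derivWithin hJ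
  rw [h]
  cases q with
  | zero => simp
  | succ q =>
    simp only [Pi.mul_apply, Pi.pow_apply, Pi.inv_apply, Pi.neg_apply, Nat.add_sub_cancel,
      div_eq_mul_inv, ← inv_pow]
    ring

/-- `u^q D^m (u^(-q) w) - D^m w` is `q` times a polynomial in `q` of degree less than `m`. -/
theorem exists_polynomial_iteratedDerivWithin_inv_pow_mul {J : Set ℝ} (hJ : UniqueDiffOn ℝ J)
    {u : ℝ → ℂ} (hu0 : ∀ t ∈ J, u t ≠ 0) {t : ℝ} (ht : t ∈ J) (m : ℕ) {w : ℝ → ℂ}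
    (hu : ContDiffOn ℝ m u J) (hw : ContDiffOn ℝ m w J) :
    ∃ S : Polynomial ℂ, S.degree < m ∧ ∀ q : ℕ,
      u t ^ q * iteratedDerivWithin m (u⁻¹ ^ q * w) J t =
        iteratedDerivWithin m w J t + q * S.eval (q : ℂ) := by
  induction m generalizing w with
  | zero =>
    refine ⟨0, by simp, fun q => ?_⟩
    have := hu0 t ht
    simp [this]
  | succ m ih =>
    have hum : ContDiffOn ℝ m u J := hu.of_le (by norm_cast; omega)
    have hwm : ContDiffOn ℝ m w J := hw.of_le (by norm_cast; omega)
    have hinv : ContDiffOn ℝ m u⁻¹ J := hum.inv hu0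
    have hu' : ContDiffOn ℝ m (derivWithin u J) J := hu.derivWithin hJ (by norm_cast)
    have hw' : ContDiffOn ℝ m (derivWithin w J) J := hw.derivWithin hJ (by norm_cast)
    have hh : ContDiffOn ℝ m (-(derivWithin u J * u⁻¹) * w) J := ((hu'.mul hinv).neg).mul hwm
    obtain ⟨A, hA, hA'⟩ := ih hum hh
    obtain ⟨B, hB, hB'⟩ := ih hum hw'
    refine ⟨Polynomial.C (iteratedDerivWithin m (-(derivWithin u J * u⁻¹) * w) J t) +
      Polynomial.X * A + B, ?_, fun q => ?_⟩
    · have hlt : (m : WithBot ℕ) < ((m + 1 : ℕ) : WithBot ℕ) := by norm_cast; omega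
      refine (Polynomial.degree_add_le _ _).trans_lt (max_lt ?_ (hB.trans hlt))
      refine (Polynomial.degree_add_le _ _).trans_lt (max_lt ?_ ?_)
      · exact Polynomial.degree_C_le.trans_lt (by norm_cast; omega)
      · rcases eq_or_ne A 0 with rfl | h0
        · simp only [mul_zero, Polynomial.degree_zero]
          exact WithBot.bot_lt_coe _
        · have h1 := (Polynomial.natDegree_lt_iff_degree_lt h0).2 hA
          refine (Polynomial.natDegree_lt_iff_degree_lt
            (mul_ne_zero Polynomial.X_ne_zero h0)).1 ?_
          rw [Polynomial.natDegree_X_mul h0]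
          omega
    · have hpow : ContDiffOn ℝ m (u⁻¹ ^ q) J := hinv.pow q
      have hqh : ContDiffOn ℝ m (u⁻¹ ^ q * (-(derivWithin u J * u⁻¹) * w)) J := hpow.mul hh
      have hqw : ContDiffOn ℝ m (u⁻¹ ^ q * derivWithin w J) J := hpow.mul hw'
      have hqqh : ContDiffOn ℝ m ((q : ℂ) • (u⁻¹ ^ q * (-(derivWithin u J * u⁻¹) * w))) J :=
        hqh.const_smul (q : ℂ)
      have hD : Set.EqOn (derivWithin (u⁻¹ ^ q * w) J)
          ((q : ℂ) • (u⁻¹ ^ q * (-(derivWithin u J * u⁻¹) * w)) +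
            u⁻¹ ^ q * derivWithin w J) J := fun x hx =>
        derivWithin_inv_pow_mul (hu0 x hx)
          (hu.differentiableOn (by norm_cast) x hx)
          (hw.differentiableOn (by norm_cast) x hx) (hJ x hx) q
      rw [iteratedDerivWithin_succ', iteratedDerivWithin_congr hD ht,
        iteratedDerivWithin_add ht hJ (hqqh t ht) (hqw t ht),
        iteratedDerivWithin_const_smul ht hJ (q : ℂ) (hqh t ht),
        iteratedDerivWithin_succ']
      simp only [smul_eq_mul, Polynomial.eval_add, Polynomial.eval_mul, Polynomial.eval_C,
        Polynomial.eval_X]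
      linear_combination (q : ℂ) * hA' q + hB' q

theorem stmt4 (J : Set ℝ) (hJconn : J.OrdConnected) (hJuniq : UniqueDiffOn ℝ J)
    (n : ℕ) (l : ℕ) (hl : 1 ≤ l) (u v w : ℝ → ℂ)
    (hu : ContDiffOn ℝ n u J) (hv : ContDiffOn ℝ n v J) (hw : ContDiffOn ℝ n w J)
    (hu0 : ∀ t ∈ J, u t ≠ 0) :
    ∀ t ∈ J,
      (∑ p ∈ Finset.range (n + 1), (n.choose p : ℂ) * ((-1 : ℂ) ^ p / ((p : ℂ) + l)) *
        (u ^ (p + l)) t *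
        iteratedDerivWithin p (v * iteratedDerivWithin (n - p) (u⁻¹ ^ (p + l) * w) J) J t) =
      ∑ p ∈ Finset.range (n + 1), (n.choose p : ℂ) * ((-1 : ℂ) ^ p / ((p : ℂ) + l)) *
        iteratedDerivWithin p (v * iteratedDerivWithin (n - p) w J) J t := by
  intro t ht
  have hS : ∀ a : ℕ, ∃ S : Polynomial ℂ, S.degree < (n - a : ℕ) ∧ ∀ q : ℕ,
      u t ^ q * iteratedDerivWithin (n - a) (u⁻¹ ^ q * w) J t =
        iteratedDerivWithin (n - a) w J t + q * S.eval (q : ℂ) := fun a =>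
    exists_polynomial_iteratedDerivWithin_inv_pow_mul hJuniq hu0 ht (n - a)
      (hu.of_le (by exact_mod_cast Nat.sub_le n a)) (hw.of_le (by exact_mod_cast Nat.sub_le n a))
  choose S hdeg hS using hS
  have hgq (q : ℕ) : ContDiffOn ℝ n (u⁻¹ ^ q * w) J := ((hu.inv hu0).pow q).mul hw
  rw [← sub_eq_zero, ← Finset.sum_sub_distrib]
  calc
    _ = ∑ p ∈ Finset.range (n + 1), ∑ a ∈ Finset.range (n + 1),
        iteratedDerivWithin a v J t * ((n.choose p : ℂ) * (-1) ^ p *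
          ((p.choose a : ℂ) * (S a).eval ((p + l : ℕ) : ℂ))) := by
      refine Finset.sum_congr rfl fun p hp => ?_
      have hpn : p ≤ n := Nat.lt_succ_iff.1 (Finset.mem_range.1 hp)
      rw [iteratedDerivWithin_mul_iteratedDerivWithin hJuniq hv (hgq (p + l)) hpn ht,
        iteratedDerivWithin_mul_iteratedDerivWithin hJuniq hv hw hpn ht,
        Finset.mul_sum, Finset.mul_sum, ← Finset.sum_sub_distrib]
      refine Finset.sum_congr rfl fun a _ => ?_
      have hne : (p : ℂ) + l ≠ 0 := by
        exact_mod_cast (by omega : p + l ≠ 0)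
      have h := hS a (p + l)
      have hc : (-1 : ℂ) ^ p / ((p : ℂ) + l) * ((p : ℂ) + l) = (-1) ^ p :=
        div_mul_cancel₀ _ hne
      rw [Pi.pow_apply]
      push_cast at h ⊢
      linear_combination (n.choose p : ℂ) * ((-1 : ℂ) ^ p / ((p : ℂ) + l)) * (p.choose a : ℂ) *
        iteratedDerivWithin a v J t * h + (n.choose p : ℂ) * (p.choose a : ℂ) *
        iteratedDerivWithin a v J t * (S a).eval ((p : ℂ) + l) * hc
    _ = 0 := by
      rw [Finset.sum_comm]
      refine Finset.sum_eq_zero fun a ha => ?_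
      rw [← Finset.mul_sum, Polynomial.sum_choose_mul_choose_mul_eval_eq_zero
        (Nat.lt_succ_iff.1 (Finset.mem_range.1 ha)) (hdeg a) l, mul_zero]
end

section
/- (Lagrange product formula.) For every natural number n and every triple (ψ, f, g) of n-times continuously differentiable complex-valued functions on an interval J, (1/n!)·D^{n-1}(ψ^n · D(fg)) = Σ_{k=0}^{n} (1/k!)·D^{k-1}(ψ^k · Df) · (1/(n-k)!)·D^{n-k-1}(ψ^{n-k} · Dg), with the convention that for m = 0, D^{m-1}(ψ^m · Dh) denotes the function h itself. -/
open scoped Nat BigOperators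

/-- `lag J ψ h m = D^{m-1}(ψ^m · Dh)` for `m ≥ 1`, with the convention that
for `m = 0` it is the function `h` itself. Derivatives are taken within `J`. -/
noncomputable def lag (J : Set ℝ) (ψ h : ℝ → ℂ) : ℕ → ℝ → ℂ
  | 0 => h
  | (m + 1) => iteratedDerivWithin m (ψ ^ (m + 1) * derivWithin h J) J

open Finset.HasAntidiagonal (antidiagonal mem_antidiagonal)

/-- The normalized operator `h ↦ D^n(ψ^n h) / n!`, with derivatives taken within `J`. -/
noncomputable def lagDensity (J : Set ℝ) (ψ : ℝ → ℂ) (n : ℕ) (h : ℝ → ℂ) (t : ℝ) : ℂ :=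
  (1 / (n ! : ℂ)) * iteratedDerivWithin n (ψ ^ n * h) J t

/-- The normalized operator `h ↦ D^{n-1}(ψ^n Dh) / n!`, with derivatives taken within `J`. -/
noncomputable def lagCoeff (J : Set ℝ) (ψ : ℝ → ℂ) (n : ℕ) (h : ℝ → ℂ) (t : ℝ) : ℂ :=
  (1 / (n ! : ℂ)) * lag J ψ h n t

lemma succ_mul_one_div_factorial_succ (n : ℕ) (x : ℂ) :
    ((n : ℂ) + 1) * (1 / ((n + 1)! : ℂ) * x) = 1 / (n ! : ℂ) * x := by
  have h₁ : (n ! : ℂ) ≠ 0 := by exact_mod_cast n.factorial_ne_zero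
  have h₂ : (n : ℂ) + 1 ≠ 0 := by exact_mod_cast n.succ_ne_zero
  rw [Nat.factorial_succ]
  push_cast
  field_simp

lemma succ_mul_lagCoeff_succ (J : Set ℝ) (ψ h : ℝ → ℂ) (n : ℕ) (t : ℝ) :
    ((n : ℂ) + 1) * lagCoeff J ψ (n + 1) h t = lagDensity J ψ n (ψ * derivWithin h J) t := by
  rw [lagCoeff, succ_mul_one_div_factorial_succ, lagDensity, lag, pow_succ, mul_assoc]

lemma succ_mul_lagDensity_succ (J : Set ℝ) (ψ h : ℝ → ℂ) (n : ℕ) (t : ℝ) :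
    ((n : ℂ) + 1) * lagDensity J ψ (n + 1) h t =
      derivWithin (lagDensity J ψ n (ψ * h)) J t := by
  have : lagDensity J ψ n (ψ * h) =
      fun s => (1 / (n ! : ℂ)) * iteratedDerivWithin n (ψ ^ n * (ψ * h)) J s := rfl
  rw [lagDensity, succ_mul_one_div_factorial_succ, this, derivWithin_const_mul_field,
    iteratedDerivWithin_succ, pow_succ, mul_assoc]

lemma derivWithin_lagCoeff (J : Set ℝ) (ψ h : ℝ → ℂ) (n : ℕ) (t : ℝ) :
    derivWithin (lagCoeff J ψ n h) J t = lagDensity J ψ n (derivWithin h J) t := by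
  have : lagCoeff J ψ n h = fun s => (1 / (n ! : ℂ)) * lag J ψ h n s := rfl
  rw [this, derivWithin_const_mul_field, lagDensity]
  cases n with
  | zero => simp [lag]
  | succ n => rw [iteratedDerivWithin_succ]; rfl

lemma differentiableOn_lagDensity {J : Set ℝ} (hJ : UniqueDiffOn ℝ J) {ψ h : ℝ → ℂ} {n : ℕ}
    (hψ : ContDiffOn ℝ (n + 1 : ℕ) ψ J) (hh : ContDiffOn ℝ (n + 1 : ℕ) h J) :
    DifferentiableOn ℝ (lagDensity J ψ n h) J := by
  have : ContDiffOn ℝ (n + 1 : ℕ) (ψ ^ n * h) J := (hψ.pow n).mul hh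
  exact (this.differentiableOn_iteratedDerivWithin (by exact_mod_cast n.lt_succ_self) hJ).const_mul _

lemma ContDiffOn.derivWithin_of_succ {J : Set ℝ} (hJ : UniqueDiffOn ℝ J) {h : ℝ → ℂ} {n : ℕ}
    (hh : ContDiffOn ℝ (n + 1 : ℕ) h J) : ContDiffOn ℝ n (derivWithin h J) J :=
  hh.derivWithin hJ (by norm_cast)

lemma differentiableOn_lagCoeff {J : Set ℝ} (hJ : UniqueDiffOn ℝ J) {ψ h : ℝ → ℂ} {n : ℕ}
    (hψ : ContDiffOn ℝ (n + 1 : ℕ) ψ J) (hh : ContDiffOn ℝ (n + 1 : ℕ) h J) :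
    DifferentiableOn ℝ (lagCoeff J ψ n h) J := by
  cases n with
  | zero => exact (hh.differentiableOn (by simp)).const_mul _
  | succ n =>
    have : ContDiffOn ℝ (n + 1 : ℕ) (ψ ^ (n + 1) * derivWithin h J) J :=
      ((hψ.of_le (by norm_cast; omega)).pow _).mul (hh.derivWithin_of_succ hJ)
    exact (this.differentiableOn_iteratedDerivWithin
      (by exact_mod_cast n.lt_succ_self) hJ).const_mul _

/-- The weight `i + j = n + 1` distributes over a convolution sum. -/
lemma succ_mul_sum_antidiagonal (a b : ℕ → ℂ) (n : ℕ) :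
    ((n : ℂ) + 1) * ∑ p ∈ antidiagonal (n + 1), a p.1 * b p.2 =
      ∑ p ∈ antidiagonal n,
        ((((p.1 : ℂ) + 1) * a (p.1 + 1)) * b p.2 + a p.1 * (((p.2 : ℂ) + 1) * b (p.2 + 1))) := by
  have h : ((n : ℂ) + 1) * ∑ p ∈ antidiagonal (n + 1), a p.1 * b p.2 =
      ∑ p ∈ antidiagonal (n + 1), (p.1 : ℂ) * a p.1 * b p.2 +
        ∑ p ∈ antidiagonal (n + 1), a p.1 * ((p.2 : ℂ) * b p.2) := by
    rw [Finset.mul_sum, ← Finset.sum_add_distrib]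
    refine Finset.sum_congr rfl fun p hp => ?_
    have : (n : ℂ) + 1 = p.1 + p.2 := by exact_mod_cast (mem_antidiagonal.1 hp).symm
    rw [this]
    ring
  rw [h, Finset.Nat.sum_antidiagonal_succ, Finset.Nat.sum_antidiagonal_succ',
    Finset.sum_add_distrib]
  simp

/-- Associativity of convolution, with the inner convolutions known only up to index `n`. -/
lemma sum_antidiagonal_assoc_of_le {a b c ab bc : ℕ → ℂ} {n : ℕ}
    (hab : ∀ m ≤ n, ab m = ∑ p ∈ antidiagonal m, a p.1 * b p.2)
    (hbc : ∀ m ≤ n, bc m = ∑ p ∈ antidiagonal m, b p.1 * c p.2) :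
    ∑ p ∈ antidiagonal n, ab p.1 * c p.2 =
      ∑ p ∈ antidiagonal n, a p.1 * bc p.2 := by
  have h := congrArg (PowerSeries.coeff n)
    (mul_assoc (PowerSeries.mk a) (PowerSeries.mk b) (PowerSeries.mk c))
  simp only [PowerSeries.coeff_mul, PowerSeries.coeff_mk] at h
  convert h using 1 <;> refine Finset.sum_congr rfl fun p hp => ?_
  · rw [hab _ (by have := mem_antidiagonal.1 hp; omega)]
  · rw [hbc _ (by have := mem_antidiagonal.1 hp; omega)]

theorem lagDensity_mul {J : Set ℝ} (hJ : UniqueDiffOn ℝ J) {ψ : ℝ → ℂ} {n : ℕ} {f g : ℝ → ℂ}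
    (hψ : ContDiffOn ℝ n ψ J) (hf : ContDiffOn ℝ n f J) (hg : ContDiffOn ℝ n g J)
    {t : ℝ} (ht : t ∈ J) :
    lagDensity J ψ n (f * g) t =
      ∑ p ∈ antidiagonal n, lagCoeff J ψ p.1 f t * lagDensity J ψ p.2 g t := by
  induction n using Nat.strong_induction_on generalizing f g t with
  | _ n ih =>
  cases n with
  | zero => simp [lagDensity, lagCoeff, lag]
  | succ n =>
    have le_succ {m : ℕ} (hm : m ≤ n) {h : ℝ → ℂ} (hh : ContDiffOn ℝ (n + 1 : ℕ) h J) :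
        ContDiffOn ℝ m h J := hh.of_le (by norm_cast; omega)
    have hf' : ContDiffOn ℝ n (derivWithin f J) J := hf.derivWithin_of_succ hJ
    have hderiv : derivWithin (lagDensity J ψ n (ψ * (f * g))) J t =
        ∑ p ∈ antidiagonal n,
          (lagDensity J ψ p.1 (derivWithin f J) t * lagDensity J ψ p.2 (ψ * g) t +
            lagCoeff J ψ p.1 f t * (((p.2 : ℂ) + 1) * lagDensity J ψ (p.2 + 1) g t)) := by
      have heq : Set.EqOn (lagDensity J ψ n (ψ * (f * g)))
          (fun s => ∑ p ∈ antidiagonal n,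
            lagCoeff J ψ p.1 f s * lagDensity J ψ p.2 (ψ * g) s) J := fun s hs => by
        rw [mul_left_comm]
        exact ih n n.lt_succ_self (le_succ le_rfl hψ) (le_succ le_rfl hf)
          (le_succ le_rfl (hψ.mul hg)) hs
      have hL : ∀ p ∈ antidiagonal n,
          DifferentiableWithinAt ℝ (lagCoeff J ψ p.1 f) J t := fun p hp => by
        have := mem_antidiagonal.1 hp
        exact differentiableOn_lagCoeff hJ (hψ.of_le (by norm_cast; omega))
          (hf.of_le (by norm_cast; omega)) t ht
      have hE : ∀ p ∈ antidiagonal n,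
          DifferentiableWithinAt ℝ (lagDensity J ψ p.2 (ψ * g)) J t := fun p hp => by
        have := mem_antidiagonal.1 hp
        exact differentiableOn_lagDensity hJ (hψ.of_le (by norm_cast; omega))
          ((hψ.mul hg).of_le (by norm_cast; omega)) t ht
      rw [derivWithin_congr heq (heq ht),
        derivWithin_fun_sum fun p hp => (hL p hp).fun_mul (hE p hp)]
      refine Finset.sum_congr rfl fun p hp => ?_
      rw [derivWithin_fun_mul (hL p hp) (hE p hp), derivWithin_lagCoeff,
        succ_mul_lagDensity_succ]
    have hexchange : ∑ p ∈ antidiagonal n,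
          lagDensity J ψ p.1 (ψ * derivWithin f J) t * lagDensity J ψ p.2 g t =
        ∑ p ∈ antidiagonal n,
          lagDensity J ψ p.1 (derivWithin f J) t * lagDensity J ψ p.2 (ψ * g) t := by
      refine sum_antidiagonal_assoc_of_le (a := fun k => lagDensity J ψ k (derivWithin f J) t)
        (b := fun k => lagCoeff J ψ k ψ t) (c := fun k => lagDensity J ψ k g t)
        (ab := fun k => lagDensity J ψ k (ψ * derivWithin f J) t)
        (bc := fun k => lagDensity J ψ k (ψ * g) t) (fun m hm => ?_) (fun m hm => ?_)
      · rw [← Finset.Nat.sum_antidiagonal_swap]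
        simp only [Prod.fst_swap, Prod.snd_swap, mul_comm (lagDensity _ _ _ _ _)]
        exact ih m (by omega) (le_succ hm hψ) (le_succ hm hψ)
          (hf'.of_le (by exact_mod_cast hm)) ht
      · exact ih m (by omega) (le_succ hm hψ) (le_succ hm hψ) (le_succ hm hg) ht
    refine mul_left_cancel₀ (show (n : ℂ) + 1 ≠ 0 by exact_mod_cast n.succ_ne_zero) ?_
    rw [succ_mul_lagDensity_succ, hderiv, succ_mul_sum_antidiagonal
      (fun k => lagCoeff J ψ k f t) (fun k => lagDensity J ψ k g t)]
    simp only [Finset.sum_add_distrib, succ_mul_lagCoeff_succ, hexchange]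

theorem lagCoeff_mul {J : Set ℝ} (hJ : UniqueDiffOn ℝ J) {ψ : ℝ → ℂ} {n : ℕ} {f g : ℝ → ℂ}
    (hψ : ContDiffOn ℝ n ψ J) (hf : ContDiffOn ℝ n f J) (hg : ContDiffOn ℝ n g J)
    {t : ℝ} (ht : t ∈ J) :
    lagCoeff J ψ n (f * g) t =
      ∑ p ∈ antidiagonal n, lagCoeff J ψ p.1 f t * lagCoeff J ψ p.2 g t := by
  cases n with
  | zero => simp [lagCoeff, lag]
  | succ n =>
    have of_succ {h : ℝ → ℂ} (hh : ContDiffOn ℝ (n + 1 : ℕ) h J) : ContDiffOn ℝ n h J :=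
      hh.of_le (by norm_cast; omega)
    have hψf : ContDiffOn ℝ n (ψ * derivWithin f J) J :=
      (of_succ hψ).mul (hf.derivWithin_of_succ hJ)
    have hψg : ContDiffOn ℝ n (ψ * derivWithin g J) J :=
      (of_succ hψ).mul (hg.derivWithin_of_succ hJ)
    have hsplit : lagDensity J ψ n (ψ * derivWithin (f * g) J) t =
        lagDensity J ψ n (g * (ψ * derivWithin f J)) t +
          lagDensity J ψ n (f * (ψ * derivWithin g J)) t := by
      have heq : Set.EqOn (ψ ^ n * (ψ * derivWithin (f * g) J))
          (ψ ^ n * (g * (ψ * derivWithin f J)) + ψ ^ n * (f * (ψ * derivWithin g J))) J :=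
        fun s hs => by
          simp only [Pi.mul_apply, Pi.add_apply, Pi.pow_apply]
          rw [derivWithin_mul (hf.differentiableOn (by simp) s hs)
            (hg.differentiableOn (by simp) s hs)]
          ring
      have h₁ : ContDiffOn ℝ n (ψ ^ n * (g * (ψ * derivWithin f J))) J :=
        ((of_succ hψ).pow n).mul ((of_succ hg).mul hψf)
      have h₂ : ContDiffOn ℝ n (ψ ^ n * (f * (ψ * derivWithin g J))) J :=
        ((of_succ hψ).pow n).mul ((of_succ hf).mul hψg)
      simp only [lagDensity]
      rw [iteratedDerivWithin_congr heq ht, iteratedDerivWithin_add ht hJ (h₁ t ht) (h₂ t ht),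
        mul_add]
    refine mul_left_cancel₀ (show (n : ℂ) + 1 ≠ 0 by exact_mod_cast n.succ_ne_zero) ?_
    rw [succ_mul_lagCoeff_succ, hsplit, lagDensity_mul hJ (of_succ hψ) (of_succ hg) hψf ht,
      lagDensity_mul hJ (of_succ hψ) (of_succ hf) hψg ht, succ_mul_sum_antidiagonal
      (fun k => lagCoeff J ψ k f t) (fun k => lagCoeff J ψ k g t), Finset.sum_add_distrib,
      ← Finset.Nat.sum_antidiagonal_swap]
    simp only [Prod.fst_swap, Prod.snd_swap, succ_mul_lagCoeff_succ,
      mul_comm (lagCoeff J ψ _ g t)]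

theorem stmt9 (J : Set ℝ) (hJconn : J.OrdConnected) (hJuniq : UniqueDiffOn ℝ J)
    (n : ℕ) (ψ f g : ℝ → ℂ)
    (hψ : ContDiffOn ℝ n ψ J) (hf : ContDiffOn ℝ n f J) (hg : ContDiffOn ℝ n g J) :
    ∀ t ∈ J,
      (1 / (n ! : ℂ)) * lag J ψ (f * g) n t =
        ∑ k ∈ Finset.range (n + 1),
          ((1 / (k ! : ℂ)) * lag J ψ f k t) * ((1 / ((n - k)! : ℂ)) * lag J ψ g (n - k) t) := by
  intro t ht
  have h := lagCoeff_mul hJuniq hψ hf hg ht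
  rwa [Finset.Nat.sum_antidiagonal_eq_sum_range_succ
    (fun i j => lagCoeff J ψ i f t * lagCoeff J ψ j g t)] at h
end

section
/- (Lagrange product formula, multifactor version.) For every natural number n, every integer p ≥ 2, and every system (ψ, f_1, …, f_p) of C^n complex-valued functions on an interval J, (1/n!)·D^{n-1}(ψ^n · D(f_1 ⋯ f_p)) = Σ_{α_1 + ⋯ + α_p = n} ∏_{j=1}^{p} (1/α_j!)·D^{α_j - 1}(ψ^{α_j} · D f_j), where the sum ranges over all p-tuples of natural numbers summing to n, with the convention that for α = 0 the factor D^{α-1}(ψ^α D f_j) denotes f_j. -/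
open scoped Nat BigOperators

/-- The function `D^n(ψ^n · g)`, with derivatives taken within `J`. -/
noncomputable def lagD (J : Set ℝ) (ψ g : ℝ → ℂ) (n : ℕ) : ℝ → ℂ :=
  iteratedDerivWithin n (ψ ^ n * g) J

/-- The exponential generating series of `m ↦ lag J ψ h m t`. -/
noncomputable def lagSeries (J : Set ℝ) (ψ h : ℝ → ℂ) (t : ℝ) : PowerSeries ℂ :=
  PowerSeries.mk fun m => lag J ψ h m t / (m ! : ℂ)

/-- The exponential generating series of `m ↦ lagD J ψ g m t`. -/
noncomputable def lagDSeries (J : Set ℝ) (ψ g : ℝ → ℂ) (t : ℝ) : PowerSeries ℂ :=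
  PowerSeries.mk fun m => lagD J ψ g m t / (m ! : ℂ)

theorem lag_succ (J : Set ℝ) (ψ h : ℝ → ℂ) (m : ℕ) :
    lag J ψ h (m + 1) = lagD J ψ (ψ * derivWithin h J) m := by
  simp only [lag, lagD, pow_succ, mul_assoc]

theorem derivWithin_lag (J : Set ℝ) (ψ h : ℝ → ℂ) (m : ℕ) :
    derivWithin (lag J ψ h m) J = lagD J ψ (derivWithin h J) m := by
  cases m with
  | zero => simp [lag, lagD]
  | succ m => simp only [lag, lagD, iteratedDerivWithin_succ]

theorem derivWithin_lagD_mul (J : Set ℝ) (ψ g : ℝ → ℂ) (m : ℕ) :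
    derivWithin (lagD J ψ (ψ * g) m) J = lagD J ψ g (m + 1) := by
  simp only [lagD, iteratedDerivWithin_succ, pow_succ, mul_assoc]

theorem ContDiffOn.differentiableOn_lagD {J : Set ℝ} {ψ g : ℝ → ℂ} {n m : ℕ}
    (hJ : UniqueDiffOn ℝ J) (hψ : ContDiffOn ℝ n ψ J) (hg : ContDiffOn ℝ n g J) (hm : m < n) :
    DifferentiableOn ℝ (lagD J ψ g m) J :=
  ContDiffOn.differentiableOn_iteratedDerivWithin ((hψ.pow m).mul hg) (by exact_mod_cast hm) hJ

theorem ContDiffOn.differentiableOn_lag {J : Set ℝ} {ψ h : ℝ → ℂ} {n m : ℕ}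
    (hJ : UniqueDiffOn ℝ J) (hψ : ContDiffOn ℝ n ψ J) (hh : ContDiffOn ℝ n h J) (hm : m < n) :
    DifferentiableOn ℝ (lag J ψ h m) J := by
  cases m with
  | zero => exact hh.differentiableOn (by exact_mod_cast hm.ne')
  | succ m =>
    obtain ⟨n, rfl⟩ : ∃ k, n = k + 1 := ⟨n - 1, by omega⟩
    have hψ' : ContDiffOn ℝ n ψ J := hψ.of_le (by exact_mod_cast n.le_succ)
    rw [lag_succ]
    exact ContDiffOn.differentiableOn_lagD hJ hψ'
      (hψ'.mul (hh.derivWithin hJ (by norm_cast))) (by omega)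

theorem derivative_lagSeries (J : Set ℝ) (ψ h : ℝ → ℂ) (t : ℝ) :
    PowerSeries.derivative ℂ (lagSeries J ψ h t) = lagDSeries J ψ (ψ * derivWithin h J) t := by
  ext m
  rw [PowerSeries.coeff_derivative]
  simp only [lagSeries, lagDSeries, PowerSeries.coeff_mk, lag_succ, Nat.factorial_succ]
  have : (m ! : ℂ) ≠ 0 := by exact_mod_cast m.factorial_ne_zero
  have : (m + 1 : ℂ) ≠ 0 := by exact_mod_cast m.succ_ne_zero
  push_cast
  field_simp

/-- The coefficient of order `n` of a product only depends on the coefficients of order at most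
`n` of the second factor. -/
theorem PowerSeries.coeff_mul_congr_right {R : Type*} [Semiring R] {n : ℕ} (a : PowerSeries R)
    {b c : PowerSeries R} (h : ∀ m ≤ n, coeff m b = coeff m c) :
    coeff n (a * b) = coeff n (a * c) := by
  rw [coeff_mul, coeff_mul]
  refine Finset.sum_congr rfl fun x hx => ?_
  rw [h _ (Finset.HasAntidiagonal.antidiagonal.snd_le hx)]

theorem derivWithin_lagD_div (J : Set ℝ) (ψ g : ℝ → ℂ) (m : ℕ) (t : ℝ) :
    derivWithin (lagD J ψ (ψ * g) m) J t / (m ! : ℂ) =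
      PowerSeries.coeff m (PowerSeries.derivative ℂ (lagDSeries J ψ g t)) := by
  rw [PowerSeries.coeff_derivative, derivWithin_lagD_mul]
  simp only [lagDSeries, PowerSeries.coeff_mk, Nat.factorial_succ]
  have : (m ! : ℂ) ≠ 0 := by exact_mod_cast m.factorial_ne_zero
  have : (m + 1 : ℂ) ≠ 0 := by exact_mod_cast m.succ_ne_zero
  push_cast
  field_simp

/-- The product rule `D^n(ψ^n f g) = ∑ k, n.choose k * D^(k-1)(ψ^k Df) * D^(n-k)(ψ^(n-k) g)`. -/
theorem coeff_lagDSeries_mul {J : Set ℝ} (hJ : UniqueDiffOn ℝ J) {n : ℕ} {ψ f g : ℝ → ℂ}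
    (hψ : ContDiffOn ℝ n ψ J) (hf : ContDiffOn ℝ n f J) (hg : ContDiffOn ℝ n g J)
    {t : ℝ} (ht : t ∈ J) :
    PowerSeries.coeff n (lagDSeries J ψ (f * g) t) =
      PowerSeries.coeff n (lagSeries J ψ f t * lagDSeries J ψ g t) := by
  induction n using Nat.strong_induction_on generalizing f g t with
  | _ n ih =>
  cases n with
  | zero => simp [PowerSeries.coeff_mul, lagDSeries, lagSeries, lagD, lag]
  | succ n =>
    have hle : ((n : ℕ) : WithTop ℕ∞) ≤ ((n + 1 : ℕ) : WithTop ℕ∞) := by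
      exact_mod_cast n.le_succ
    have hf' : ContDiffOn ℝ n (derivWithin f J) J := hf.derivWithin hJ (by norm_cast)
    have swap : PowerSeries.coeff n
          (lagDSeries J ψ (derivWithin f J) t * lagDSeries J ψ (ψ * g) t) =
        PowerSeries.coeff n
          (lagDSeries J ψ (ψ * derivWithin f J) t * lagDSeries J ψ g t) := by
      have slide {u : ℝ → ℂ} (hu : ContDiffOn ℝ n u J) (m : ℕ) (hm : m ≤ n) :
          PowerSeries.coeff m (lagDSeries J ψ (ψ * u) t) =
            PowerSeries.coeff m (lagSeries J ψ ψ t * lagDSeries J ψ u t) := by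
        have hm' : ((m : ℕ) : WithTop ℕ∞) ≤ (n : ℕ) := by exact_mod_cast hm
        exact ih m (by omega) (hψ.of_le (hm'.trans hle)) (hψ.of_le (hm'.trans hle))
          (hu.of_le hm') ht
      rw [PowerSeries.coeff_mul_congr_right _ (slide (hg.of_le hle)),
        mul_comm (lagDSeries J ψ (ψ * derivWithin f J) t),
        PowerSeries.coeff_mul_congr_right _ (slide hf')]
      congr 1
      ring
    have hn : (n + 1 : ℂ) ≠ 0 := by exact_mod_cast n.succ_ne_zero
    have hlag (m : ℕ) (hm : m ≤ n) : DifferentiableWithinAt ℝ (lag J ψ f m) J t :=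
      ContDiffOn.differentiableOn_lag hJ hψ hf (by omega) t ht
    have hlagD (m : ℕ) (hm : m ≤ n) : DifferentiableWithinAt ℝ (lagD J ψ (ψ * g) m) J t :=
      ContDiffOn.differentiableOn_lagD hJ hψ (hψ.mul hg) (by omega) t ht
    have expand : Set.EqOn (fun s => lagD J ψ (ψ * (f * g)) n s / (n ! : ℂ))
        (fun s => ∑ x ∈ Finset.HasAntidiagonal.antidiagonal n, lag J ψ f x.1 s / (x.1 ! : ℂ) *
          (lagD J ψ (ψ * g) x.2 s / (x.2 ! : ℂ))) J := by
      intro s hs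
      have hψg : ContDiffOn ℝ n (ψ * g) J := (hψ.mul hg).of_le hle
      have := ih n (by omega) (hψ.of_le hle) (hf.of_le hle) hψg hs
      rw [PowerSeries.coeff_mul] at this
      simpa only [lagDSeries, lagSeries, PowerSeries.coeff_mk, mul_left_comm f ψ g] using this
    have key : PowerSeries.coeff n (PowerSeries.derivative ℂ (lagDSeries J ψ (f * g) t)) =
        PowerSeries.coeff n (PowerSeries.derivative ℂ
          (lagSeries J ψ f t * lagDSeries J ψ g t)) := by
      rw [← derivWithin_lagD_div, ← derivWithin_div_const, derivWithin_congr expand (expand ht),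
        derivWithin_fun_sum fun x hx =>
          ((hlag _ (Finset.HasAntidiagonal.antidiagonal.fst_le hx)).div_const _).fun_mul
          ((hlagD _ (Finset.HasAntidiagonal.antidiagonal.snd_le hx)).div_const _),
        Derivation.leibniz, smul_eq_mul, smul_eq_mul, derivative_lagSeries, map_add,
        mul_comm (lagDSeries J ψ g t), ← swap, PowerSeries.coeff_mul, PowerSeries.coeff_mul,
        ← Finset.sum_add_distrib]
      refine Finset.sum_congr rfl fun x hx => ?_
      rw [derivWithin_fun_mul ((hlag _ (Finset.HasAntidiagonal.antidiagonal.fst_le hx)).div_const _)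
          ((hlagD _ (Finset.HasAntidiagonal.antidiagonal.snd_le hx)).div_const _),
        derivWithin_div_const, derivWithin_div_const, derivWithin_lagD_div, derivWithin_lag]
      simp only [lagDSeries, lagSeries, PowerSeries.coeff_mk]
      ring
    rw [PowerSeries.coeff_derivative, PowerSeries.coeff_derivative] at key
    exact mul_right_cancel₀ hn key

/-- The two-factor Lagrange product formula. -/
theorem coeff_lagSeries_mul {J : Set ℝ} (hJ : UniqueDiffOn ℝ J) {n : ℕ} {ψ f g : ℝ → ℂ}
    (hψ : ContDiffOn ℝ n ψ J) (hf : ContDiffOn ℝ n f J) (hg : ContDiffOn ℝ n g J)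
    {t : ℝ} (ht : t ∈ J) :
    PowerSeries.coeff n (lagSeries J ψ (f * g) t) =
      PowerSeries.coeff n (lagSeries J ψ f t * lagSeries J ψ g t) := by
  cases n with
  | zero => simp [PowerSeries.coeff_mul, lagSeries, lag]
  | succ n =>
    have hle : ((n : ℕ) : WithTop ℕ∞) ≤ ((n + 1 : ℕ) : WithTop ℕ∞) := by
      exact_mod_cast n.le_succ
    have hψn := hψ.of_le hle
    have hfn := hf.of_le hle
    have hgn := hg.of_le hle
    have hf' : ContDiffOn ℝ n (ψ * derivWithin f J) J :=
      hψn.mul (hf.derivWithin hJ (by norm_cast))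
    have hg' : ContDiffOn ℝ n (ψ * derivWithin g J) J :=
      hψn.mul (hg.derivWithin hJ (by norm_cast))
    have split : lagD J ψ (ψ * derivWithin (f * g) J) n t =
        lagD J ψ (f * (ψ * derivWithin g J)) n t + lagD J ψ (g * (ψ * derivWithin f J)) n t := by
      simp only [lagD]
      have hfg : ContDiffOn ℝ n (ψ ^ n * (f * (ψ * derivWithin g J))) J :=
        (hψn.pow n).mul (hfn.mul hg')
      have hgf : ContDiffOn ℝ n (ψ ^ n * (g * (ψ * derivWithin f J))) J :=
        (hψn.pow n).mul (hgn.mul hf')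
      rw [← iteratedDerivWithin_add ht hJ (hfg t ht) (hgf t ht)]
      refine iteratedDerivWithin_congr (fun s hs => ?_) ht
      have hne : ((n + 1 : ℕ) : WithTop ℕ∞) ≠ 0 := by exact_mod_cast n.succ_ne_zero
      simp only [Pi.mul_apply, Pi.add_apply]
      rw [derivWithin_mul (hf.differentiableOn hne s hs) (hg.differentiableOn hne s hs)]
      ring
    have hn : (n + 1 : ℂ) ≠ 0 := by exact_mod_cast n.succ_ne_zero
    refine mul_right_cancel₀ hn ?_
    rw [← PowerSeries.coeff_derivative, ← PowerSeries.coeff_derivative, Derivation.leibniz,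
      smul_eq_mul, smul_eq_mul, derivative_lagSeries, derivative_lagSeries,
      derivative_lagSeries, map_add, ← coeff_lagDSeries_mul hJ hψn hfn hg' ht,
      ← coeff_lagDSeries_mul hJ hψn hgn hf' ht]
    simp only [lagDSeries, PowerSeries.coeff_mk, split, add_div]

theorem lagSeries_one (J : Set ℝ) (ψ : ℝ → ℂ) (t : ℝ) : lagSeries J ψ 1 t = 1 := by
  ext m
  cases m with
  | zero => simp [lagSeries, lag]
  | succ m =>
    have h : derivWithin (1 : ℝ → ℂ) J = 0 := derivWithin_one J
    simp [lagSeries, lag, h, PowerSeries.coeff_one]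

theorem coeff_lagSeries_prod {ι : Type*} {J : Set ℝ} (hJ : UniqueDiffOn ℝ J) {n : ℕ}
    {ψ : ℝ → ℂ} {f : ι → ℝ → ℂ} (hψ : ContDiffOn ℝ n ψ J) (hf : ∀ j, ContDiffOn ℝ n (f j) J)
    (s : Finset ι) {t : ℝ} (ht : t ∈ J) {m : ℕ} (hm : m ≤ n) :
    PowerSeries.coeff m (lagSeries J ψ (∏ j ∈ s, f j) t) =
      PowerSeries.coeff m (∏ j ∈ s, lagSeries J ψ (f j) t) := by
  classical
  induction s using Finset.induction_on generalizing m with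
  | empty => simp [lagSeries_one]
  | insert j s hj ih =>
    have hm' : ((m : ℕ) : WithTop ℕ∞) ≤ (n : ℕ) := by exact_mod_cast hm
    rw [Finset.prod_insert hj, Finset.prod_insert hj,
      coeff_lagSeries_mul hJ (hψ.of_le hm') ((hf j).of_le hm')
        (contDiffOn_prod' fun i _ => (hf i).of_le hm') ht]
    exact PowerSeries.coeff_mul_congr_right _ fun k hk => ih (hk.trans hm)

theorem PowerSeries.coeff_prod_fin {R : Type*} [CommSemiring R] {p : ℕ}
    (a : Fin p → PowerSeries R) (n : ℕ) :
    coeff n (∏ j, a j) = ∑ α ∈ Finset.Nat.antidiagonalTuple p n, ∏ j, coeff (α j) (a j) := by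
  rw [coeff_prod]
  refine Finset.sum_nbij' (fun l => ⇑l) Finsupp.equivFunOnFinite.symm ?_ ?_ ?_ ?_ ?_ <;>
    simp [Finset.Nat.mem_antidiagonalTuple, Finset.mem_finsuppAntidiag]

theorem stmt10 (J : Set ℝ) (hJconn : J.OrdConnected) (hJuniq : UniqueDiffOn ℝ J)
    (n p : ℕ) (hp : 2 ≤ p) (ψ : ℝ → ℂ) (f : Fin p → ℝ → ℂ)
    (hψ : ContDiffOn ℝ n ψ J) (hf : ∀ j, ContDiffOn ℝ n (f j) J) :
    ∀ t ∈ J,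
      (1 / (n ! : ℂ)) * lag J ψ (∏ j, f j) n t =
        ∑ α ∈ Finset.Nat.antidiagonalTuple p n,
          ∏ j, (1 / ((α j)! : ℂ)) * lag J ψ (f j) (α j) t := by
  intro t ht
  have h := coeff_lagSeries_prod hJuniq hψ hf Finset.univ ht le_rfl
  rw [PowerSeries.coeff_prod_fin] at h
  simpa only [lagSeries, PowerSeries.coeff_mk, div_eq_inv_mul, mul_one] using h
end
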